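/- (Theorem 2.11: tensorization of T_1 by the martingale method.) Let (E,d) be a Polish metric space and ℙ a probability measure on E^n such that P_i(·|x^{i-1}) satisfies T_1(C) for all i and x^{i-1}. Assume condition (C1'): there is a constant S > 0 such that for every bounded function f(x_{k+1},…,x_n) with ‖f‖_{Lip(d_{l_1})} ≤ 1, every x ∈ E^n and every y_k ∈ E, |𝔼_ℙ(f(X_{k+1},…,X_n)|X^k = x^k) − 𝔼_ℙ(f(X_{k+1},…,X_n)|X^k = (x^{k-1},y_k))| ≤ S·d(x_k,y_k). Then for every F : E^n → ℝ such that |F(…,x_k,…) − F(…,y_k,…)| ≤ α·d(x_k,y_k) in each coordinate k with the others fixed, 𝔼_ℙ exp(λ(F − 𝔼_ℙ F)) ≤ exp( C λ² (1+S)² α² n / 2 ) for all λ ∈ ℝ; equivalently, ℙ satisfies T_1(C_n) on (E^n, d_{l_1}) with C_n = nC(1+S)². -/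

import Mathlib

open MeasureTheory ProbabilityTheory ENNReal

noncomputable section

/-- `π` is a coupling of `μ` and `ν`. -/
def IsCoupling {E F : Type*} [MeasurableSpace E] [MeasurableSpace F]
    (π : Measure (E × F)) (μ : Measure E) (ν : Measure F) : Prop :=
  π.map Prod.fst = μ ∧ π.map Prod.snd = ν

/-- The `L^p`-Wasserstein distance associated to the cost function `d`, valued in `ℝ≥0∞`. -/
def wassersteinDist {E : Type*} [MeasurableSpace E] (p : ℝ) (d : E → E → ℝ)
    (μ ν : Measure E) : ℝ≥0∞ :=
  ⨅ (π : Measure (E × E)) (_ : IsCoupling π μ ν),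
    (∫⁻ z, ENNReal.ofReal (d z.1 z.2) ^ p ∂π) ^ (1 / p)

/-- The `L^p`-Wasserstein distance for an extended (`ℝ≥0∞`-valued) pseudo-metric `d`. -/
def wassersteinDistE {E : Type*} [MeasurableSpace E] (p : ℝ) (d : E → E → ℝ≥0∞)
    (μ ν : Measure E) : ℝ≥0∞ :=
  ⨅ (π : Measure (E × E)) (_ : IsCoupling π μ ν),
    (∫⁻ z, d z.1 z.2 ^ p ∂π) ^ (1 / p)

open Classical in
/-- Relative entropy (Kullback information) `H(ν | μ)`, valued in `ℝ≥0∞`. -/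
def relEntropy {E : Type*} [MeasurableSpace E] (ν μ : Measure E) : ℝ≥0∞ :=
  if ν ≪ μ ∧ Integrable (fun x => Real.log ((ν.rnDeriv μ x).toReal)) ν then
    ENNReal.ofReal (∫ x, Real.log ((ν.rnDeriv μ x).toReal) ∂ν)
  else ∞

/-- The transportation cost-information inequality `T_p(C)` for `μ` on `(E, d)`:
`W_p(μ, ν) ≤ √(2 C H(ν|μ))` for every probability measure `ν`, written in the equivalent
squared form `W_p(μ,ν)² ≤ 2C·H(ν|μ)` in `ℝ≥0∞`. -/
def TpIneq {E : Type*} [MeasurableSpace E] (p : ℝ) (d : E → E → ℝ) (C : ℝ)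
    (μ : Measure E) : Prop :=
  ∀ ν : Measure E, IsProbabilityMeasure ν →
    wassersteinDist p d μ ν ^ 2 ≤ ENNReal.ofReal (2 * C) * relEntropy ν μ

/-- The transportation cost-information inequality `T_p(C)` for an extended pseudo-metric. -/
def TpIneqE {E : Type*} [MeasurableSpace E] (p : ℝ) (d : E → E → ℝ≥0∞) (C : ℝ)
    (μ : Measure E) : Prop :=
  ∀ ν : Measure E, IsProbabilityMeasure ν →
    wassersteinDistE p d μ ν ^ 2 ≤ ENNReal.ofReal (2 * C) * relEntropy ν μ

/-- The law on `E^n` of the (in general non-homogeneous, non-Markovian) random sequence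
determined by the successive regular conditional laws `K i : (Fin i → E) → Measure E`
of the `(i+1)`-th coordinate given the first `i` coordinates. -/
def chainMeasure {E : Type*} [MeasurableSpace E]
    (K : (i : ℕ) → (Fin i → E) → Measure E) : (n : ℕ) → Measure (Fin n → E)
  | 0 => Measure.dirac (fun i => i.elim0)
  | n + 1 => (chainMeasure K n).bind fun x => (K n x).map (Fin.snoc x)

/-- The conditional law of the next `m` coordinates given that the first `k`
coordinates equal `x`. -/
def futureChain {E : Type*} [MeasurableSpace E]
    (K : (i : ℕ) → (Fin i → E) → Measure E) (k : ℕ) (x : Fin k → E)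
    (m : ℕ) : Measure (Fin m → E) :=
  chainMeasure (fun i y => K (k + i) (Fin.append x y)) m

section Bounded

variable {X : Type*} [MeasurableSpace X]

lemma integrable_of_bounded {μ : Measure X} [IsFiniteMeasure μ] {f : X → ℝ}
    (hf : Measurable f) {M : ℝ} (hM : ∀ x, |f x| ≤ M) : Integrable f μ :=
  .of_bound hf.aestronglyMeasurable M (ae_of_all _ fun x => by simpa using hM x)

lemma integrable_exp_of_bounded {μ : Measure X} [IsFiniteMeasure μ] {f : X → ℝ}
    (hf : Measurable f) {M : ℝ} (hM : ∀ x, |f x| ≤ M) :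
    Integrable (fun x => Real.exp (f x)) μ :=
  integrable_of_bounded (M := Real.exp M) (by fun_prop) fun x => by
    rw [abs_of_pos (Real.exp_pos _)]
    exact Real.exp_le_exp.2 ((le_abs_self _).trans (hM x))

lemma abs_integral_le_of_bounded {μ : Measure X} [IsProbabilityMeasure μ] {f : X → ℝ}
    {M : ℝ} (hM : ∀ x, |f x| ≤ M) : |∫ x, f x ∂μ| ≤ M := by
  simpa using norm_integral_le_of_norm_le_const (μ := μ) (f := f) (C := M)
    (ae_of_all _ fun x => by simpa using hM x)

lemma ofReal_integral_le_lintegral_ofReal {μ : Measure X} {f : X → ℝ} (hf : Integrable f μ) :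
    ENNReal.ofReal (∫ x, f x ∂μ) ≤ ∫⁻ x, ENNReal.ofReal (f x) ∂μ := by
  rw [integral_eq_lintegral_pos_part_sub_lintegral_neg_part hf]
  refine (ENNReal.ofReal_le_ofReal (sub_le_self _ ENNReal.toReal_nonneg)).trans ?_
  exact ENNReal.ofReal_toReal_le

end Bounded

section Transport

variable {X : Type*} [MeasurableSpace X]

lemma ofReal_integral_sub_le_wassersteinDist {d : X → X → ℝ} {μ ν : Measure X}
    [IsProbabilityMeasure μ] {g : X → ℝ} (hg : Measurable g) {M : ℝ} (hM : ∀ x, |g x| ≤ M)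
    {L : ℝ} (hL : 0 < L) (hLip : ∀ x y, g y - g x ≤ L * d x y) :
    ENNReal.ofReal (∫ x, g x ∂ν - ∫ x, g x ∂μ) ≤ ENNReal.ofReal L * wassersteinDist 1 d μ ν := by
  have hL0 : ENNReal.ofReal L ≠ 0 := by simpa using hL
  unfold wassersteinDist
  rw [ENNReal.mul_iInf_of_ne hL0 ENNReal.ofReal_ne_top]
  refine le_iInf fun π => ?_
  rw [ENNReal.mul_iInf_of_ne hL0 ENNReal.ofReal_ne_top]
  refine le_iInf fun hπ => ?_
  have hπp : IsProbabilityMeasure π := by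
    refine ⟨?_⟩
    have := congrArg (fun m => m Set.univ) hπ.1
    simpa [Measure.map_apply measurable_fst MeasurableSet.univ] using this
  have h1 : ∫ x, g x ∂μ = ∫ z, g z.1 ∂π := by
    rw [← hπ.1, integral_map measurable_fst.aemeasurable hg.aestronglyMeasurable]
  have h2 : ∫ x, g x ∂ν = ∫ z, g z.2 ∂π := by
    rw [← hπ.2, integral_map measurable_snd.aemeasurable hg.aestronglyMeasurable]
  have i1 : Integrable (fun z : X × X => g z.1) π :=
    integrable_of_bounded (by fun_prop) fun z => hM z.1
  have i2 : Integrable (fun z : X × X => g z.2) π :=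
    integrable_of_bounded (by fun_prop) fun z => hM z.2
  rw [h1, h2, ← integral_sub i2 i1]
  refine (ofReal_integral_le_lintegral_ofReal (i2.sub i1)).trans ?_
  simp only [ENNReal.rpow_one, div_one]
  rw [← lintegral_const_mul' _ _ ENNReal.ofReal_ne_top]
  refine lintegral_mono fun z => ?_
  rw [← ENNReal.ofReal_mul hL.le]
  exact ENNReal.ofReal_le_ofReal (hLip _ _)

lemma relEntropy_of_ac {μ ν : Measure X} (hac : ν ≪ μ) (hint : Integrable (llr ν μ) ν) :
    relEntropy ν μ = ENNReal.ofReal (∫ x, llr ν μ x ∂ν) := by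
  unfold relEntropy
  exact if_pos ⟨hac, hint⟩

lemma integral_llr_nonneg {μ ν : Measure X} [IsProbabilityMeasure μ] [IsProbabilityMeasure ν]
    (hac : ν ≪ μ) (hint : Integrable (llr ν μ) ν) : 0 ≤ ∫ x, llr ν μ x ∂ν := by
  simpa using InformationTheory.integral_llr_add_sub_measure_univ_nonneg hac hint

/-- The transport inequality `T₁(C)` bounds the exponential moments of bounded Lipschitz
functions. -/
lemma TpIneq.integral_exp_le {d : X → X → ℝ} {μ : Measure X} [IsProbabilityMeasure μ]
    {C : ℝ} (hC : 0 < C) (hT : TpIneq 1 d C μ)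
    {g : X → ℝ} (hg : Measurable g) {M : ℝ} (hM : ∀ x, |g x| ≤ M)
    {L : ℝ} (hL : 0 < L) (hLip : ∀ x y, g y - g x ≤ L * d x y) :
    ∫ x, Real.exp (g x) ∂μ ≤ Real.exp (∫ x, g x ∂μ + C * L ^ 2 / 2) := by
  have hexp : Integrable (fun x => Real.exp (g x)) μ := integrable_exp_of_bounded hg hM
  have hν : IsProbabilityMeasure (μ.tilted g) := isProbabilityMeasure_tilted hexp
  have hac : μ.tilted g ≪ μ := tilted_absolutelyContinuous μ g
  have hllr : llr (μ.tilted g) μ =ᵐ[μ.tilted g]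
      fun x => g x - Real.log (∫ x, Real.exp (g x) ∂μ) :=
    hac.ae_le (log_rnDeriv_tilted_left_self hexp)
  have hgν : Integrable g (μ.tilted g) := integrable_of_bounded hg hM
  have hint : Integrable (llr (μ.tilted g) μ) (μ.tilted g) :=
    (hgν.sub (integrable_const _)).congr hllr.symm
  have hH := integral_llr_nonneg hac hint
  have hT' := hT _ hν
  rw [relEntropy_of_ac hac hint, ← ENNReal.ofReal_mul (by positivity)] at hT'
  have hHeq : ∫ x, llr (μ.tilted g) μ x ∂(μ.tilted g) =
      ∫ x, g x ∂(μ.tilted g) - Real.log (∫ x, Real.exp (g x) ∂μ) := by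
    rw [integral_congr_ae hllr, integral_sub hgν (integrable_const _)]
    simp
  set H := ∫ x, llr (μ.tilted g) μ x ∂(μ.tilted g)
  set D := ∫ x, g x ∂(μ.tilted g) - ∫ x, g x ∂μ
  have hD : ENNReal.ofReal D ≤ ENNReal.ofReal L * wassersteinDist 1 d μ (μ.tilted g) :=
    ofReal_integral_sub_le_wassersteinDist hg hM hL hLip
  have hD2 : ENNReal.ofReal D ^ 2 ≤ ENNReal.ofReal (L ^ 2 * (2 * C * H)) := by
    calc ENNReal.ofReal D ^ 2
        ≤ (ENNReal.ofReal L * wassersteinDist 1 d μ (μ.tilted g)) ^ 2 := by gcongr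
      _ = ENNReal.ofReal L ^ 2 * wassersteinDist 1 d μ (μ.tilted g) ^ 2 := mul_pow _ _ _
      _ ≤ ENNReal.ofReal L ^ 2 * ENNReal.ofReal (2 * C * H) := by gcongr
      _ = _ := by rw [← ENNReal.ofReal_pow hL.le, ← ENNReal.ofReal_mul (by positivity)]
  have key : D ≤ H + C * L ^ 2 / 2 := by
    rcases le_or_gt D 0 with h | h
    · exact h.trans (by positivity)
    · rw [← ENNReal.ofReal_pow h.le, ENNReal.ofReal_le_ofReal_iff (by positivity)] at hD2
      refine le_of_sq_le_sq ?_ (by positivity)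
      nlinarith [sq_nonneg (H - C * L ^ 2 / 2)]
  have hZ : 0 < ∫ x, Real.exp (g x) ∂μ := integral_exp_pos hexp
  rw [← Real.log_le_iff_le_exp hZ]
  simp only [D] at key
  linarith

/-- One half of the Donsker–Varadhan variational formula for bounded functions. -/
lemma integral_le_integral_llr_add_log {μ ν : Measure X} [IsProbabilityMeasure μ]
    [IsProbabilityMeasure ν] (hac : ν ≪ μ) (hint : Integrable (llr ν μ) ν)
    {g : X → ℝ} (hg : Measurable g) {M : ℝ} (hM : ∀ x, |g x| ≤ M) :
    ∫ x, g x ∂ν ≤ ∫ x, llr ν μ x ∂ν + Real.log (∫ x, Real.exp (g x) ∂μ) := by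
  have hexp : Integrable (fun x => Real.exp (g x)) μ := integrable_exp_of_bounded hg hM
  have hgν : Integrable g ν := integrable_of_bounded hg hM
  have := isProbabilityMeasure_tilted hexp
  have h := integral_llr_tilted_right hac hgν hexp hint
  have h0 := integral_llr_nonneg (hac.trans (absolutelyContinuous_tilted hexp))
    (integrable_llr_tilted_right hac hgν hint hexp)
  linarith

end Transport

section Kantorovich

/-- Linear programming duality for the transport problem on a finite set. -/
lemma exists_transport_plan {ι : Type*} [Fintype ι] (c : ι → ι → ℝ) (p q : ι → ℝ) (L : ℝ)
    (h : ∀ (φ ψ : ι → ℝ) (t : ℝ), 0 ≤ t → (∀ i j, 0 ≤ φ i + ψ j + t * c i j) →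
      0 ≤ ∑ i, φ i * p i + ∑ j, ψ j * q j + t * L) :
    ∃ π : ι → ι → ℝ, (∀ i j, 0 ≤ π i j) ∧ (∀ i, ∑ j, π i j = p i) ∧
      (∀ j, ∑ i, π i j = q j) ∧ ∑ i, ∑ j, π i j * c i j ≤ L := by
  classical
  let s : PointedCone ℝ ((ι → ℝ) × (ι → ℝ) × ℝ × (ι × ι → ℝ)) :=
    { carrier := {v | 0 ≤ v.2.2.1 ∧
        ∀ i j, 0 ≤ v.1 i + v.2.1 j + v.2.2.1 * c i j + v.2.2.2 (i, j)}
      add_mem' := by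
        rintro v w ⟨hv, hv'⟩ ⟨hw, hw'⟩
        refine ⟨add_nonneg hv hw, fun i j => ?_⟩
        have := add_nonneg (hv' i j) (hw' i j)
        simp only [Prod.fst_add, Prod.snd_add, Pi.add_apply]
        linarith
      zero_mem' := by simp
      smul_mem' := by
        rintro ⟨a, ha⟩ v ⟨hv, hv'⟩
        refine ⟨mul_nonneg ha hv, fun i j => ?_⟩
        have := mul_nonneg ha (hv' i j)
        change 0 ≤ a * v.1 i + a * v.2.1 j + a * v.2.2.1 * c i j + a * v.2.2.2 (i, j)
        linarith }
  let ℓ : ((ι → ℝ) × (ι → ℝ) × ℝ × (ι × ι → ℝ)) →ₗ[ℝ] ℝ :=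
    { toFun := fun v => ∑ i, v.1 i * p i + ∑ j, v.2.1 j * q j + v.2.2.1 * L
      map_add' := fun v w => by
        simp only [Prod.fst_add, Prod.snd_add, Pi.add_apply, add_mul, Finset.sum_add_distrib]
        ring
      map_smul' := fun a v => by
        simp only [Prod.smul_fst, Prod.smul_snd, Pi.smul_apply, smul_eq_mul, mul_assoc,
          ← Finset.mul_sum, RingHom.id_apply]
        ring }
  let W : Submodule ℝ ((ι → ℝ) × (ι → ℝ) × ℝ × (ι × ι → ℝ)) := LinearMap.ker
    ((LinearMap.snd ℝ ℝ (ι × ι → ℝ)).comp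
      ((LinearMap.snd ℝ (ι → ℝ) _).comp (LinearMap.snd ℝ (ι → ℝ) _)))
  have hW : ∀ v : ((ι → ℝ) × (ι → ℝ) × ℝ × (ι × ι → ℝ)), v.2.2.2 = 0 → v ∈ W :=
    fun v hv => by simpa [W] using hv
  let f : ((ι → ℝ) × (ι → ℝ) × ℝ × (ι × ι → ℝ)) →ₗ.[ℝ] ℝ := ⟨W, ℓ.domRestrict W⟩
  obtain ⟨g, hgf, hgs⟩ := riesz_extension s f
    (by
      rintro ⟨v, hv⟩ ⟨hv1, hv2⟩
      have hv0 : v.2.2.2 = 0 := by simpa [f, W] using hv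
      refine h v.1 v.2.1 v.2.2.1 hv1 fun i j => ?_
      simpa [hv0] using hv2 i j)
    (by
      intro v
      refine ⟨⟨(fun i => -v.1 i + ∑ k, |v.2.2.2 k|, -v.2.1, -v.2.2.1, 0), hW _ rfl⟩, ?_, ?_⟩
      · simp
      · intro i j
        have h1 := Finset.single_le_sum (f := fun k => |v.2.2.2 k|) (fun k _ => abs_nonneg _)
          (Finset.mem_univ (i, j))
        have h2 := neg_abs_le (v.2.2.2 (i, j))
        simp only [Prod.fst_add, Prod.snd_add, Pi.add_apply, Pi.neg_apply, Pi.zero_apply]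
        linarith)
  let G : (ι × ι → ℝ) →ₗ[ℝ] ℝ := g.comp
    ((LinearMap.inr ℝ (ι → ℝ) _).comp ((LinearMap.inr ℝ (ι → ℝ) _).comp
      (LinearMap.inr ℝ ℝ (ι × ι → ℝ))))
  have hG : ∀ u, G u = g (0, 0, 0, u) := fun u => rfl
  let e : ι × ι → ι × ι → ℝ := fun k l => if k = l then 1 else 0
  have hGs : ∀ u, G u = ∑ i, ∑ j, u (i, j) * G (e (i, j)) := fun u => by
    rw [LinearMap.pi_apply_eq_sum_univ G u, Fintype.sum_prod_type]
    rfl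
  have hmarg : ∀ φ ψ : ι → ℝ, ∑ i, φ i * p i + ∑ j, ψ j * q j =
      G (fun k => φ k.1 + ψ k.2) := by
    intro φ ψ
    have h1 : g (φ, ψ, 0, 0) = ∑ i, φ i * p i + ∑ j, ψ j * q j := by
      have := hgf ⟨(φ, ψ, 0, 0), hW _ rfl⟩
      refine this.trans ?_
      change ∑ i, φ i * p i + ∑ j, ψ j * q j + 0 * L = _
      ring
    have h2 := hgs ((φ, ψ, 0, 0) - (0, 0, 0, fun k => φ k.1 + ψ k.2))
      ⟨by simp, fun i j => by simp⟩
    have h3 := hgs ((0, 0, 0, fun k => φ k.1 + ψ k.2) - (φ, ψ, 0, 0))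
      ⟨by simp, fun i j => by simp; linarith⟩
    rw [map_sub] at h2 h3
    rw [hG, ← h1]
    linarith
  refine ⟨fun i j => G (e (i, j)), fun i j => ?_, fun i => ?_, fun j => ?_, ?_⟩
  · refine hgs (0, 0, 0, e (i, j)) ⟨le_rfl, fun k l => ?_⟩
    simp only [Pi.zero_apply, e]
    split_ifs <;> simp
  · have := hmarg (Pi.single i 1) 0
    rw [hGs] at this
    simpa [Pi.single_apply] using this.symm
  · have := hmarg 0 (Pi.single j 1)
    rw [hGs] at this
    simpa [Pi.single_apply] using this.symm
  · have h1 := hgs ((0, 0, 1, 0) - (0, 0, 0, fun k => c k.1 k.2)) ⟨by simp, fun i j => by simp⟩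
    have h2 : g (0, 0, 1, 0) = L := by
      have := hgf ⟨(0, 0, 1, 0), hW _ rfl⟩
      refine this.trans ?_
      change ∑ i, (0 : ι → ℝ) i * p i + ∑ j, (0 : ι → ℝ) j * q j + 1 * L = _
      simp
    rw [map_sub, h2, ← hG, hGs] at h1
    simp only [mul_comm (G _)]
    linarith

/-- Kantorovich–Rubinstein duality on a finite set. -/
lemma exists_transport_plan_of_lipschitz {ι : Type*} [Fintype ι] [Nonempty ι] (c : ι → ι → ℝ)
    (hc0 : ∀ i, c i i = 0) (hctri : ∀ i j k, c i k ≤ c i j + c j k)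
    (p q : ι → ℝ) (hp : ∀ i, 0 ≤ p i) (hq : ∀ i, 0 ≤ q i) (hpq : ∑ i, p i = ∑ i, q i) (L : ℝ)
    (h : ∀ f : ι → ℝ, (∀ i j, f i - f j ≤ c i j) → ∑ i, f i * p i - ∑ i, f i * q i ≤ L) :
    ∃ π : ι → ι → ℝ, (∀ i j, 0 ≤ π i j) ∧ (∀ i, ∑ j, π i j = p i) ∧
      (∀ j, ∑ i, π i j = q j) ∧ ∑ i, ∑ j, π i j * c i j ≤ L := by
  refine exists_transport_plan c p q L fun φ ψ t ht hφψ => ?_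
  let f : ι → ℝ := fun i => ⨅ j, (ψ j + t * c i j)
  have hfψ : ∀ i, f i ≤ ψ i := fun i => by
    simpa [f, hc0] using
      ciInf_le (Set.finite_range fun j => ψ j + t * c i j).bddBelow i
  have hφf : ∀ i, -φ i ≤ f i := fun i => by
    refine le_ciInf fun j => ?_
    have := hφψ i j
    linarith
  have hfLip : ∀ i k, f i - f k ≤ t * c i k := by
    intro i k
    rw [sub_le_iff_le_add, ← sub_le_iff_le_add']
    refine le_ciInf fun j => ?_
    have h1 : f i ≤ ψ j + t * c i j := ciInf_le (Set.finite_range _).bddBelow j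
    have h2 := mul_le_mul_of_nonneg_left (hctri i k j) ht
    linarith
  have hf : ∑ i, f i * p i - ∑ i, f i * q i ≤ t * L := by
    rcases ht.eq_or_lt with rfl | ht
    · have hconst : ∀ i, f i = f (Classical.arbitrary ι) := fun i => by
        have h1 := hfLip i (Classical.arbitrary ι)
        have h2 := hfLip (Classical.arbitrary ι) i
        linarith
      rw [Finset.sum_congr rfl fun i _ => congrArg (· * p i) (hconst i),
        Finset.sum_congr rfl fun i _ => congrArg (· * q i) (hconst i),
        ← Finset.mul_sum, ← Finset.mul_sum, hpq]
      simp
    · have := h (fun i => t⁻¹ * f i) fun i j => by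
        rw [← mul_sub, inv_mul_le_iff₀ ht]
        exact hfLip i j
      simp only [mul_assoc, ← Finset.mul_sum] at this
      rwa [← mul_sub, inv_mul_le_iff₀ ht] at this
  have h1 : -∑ i, φ i * p i ≤ ∑ i, f i * p i := by
    rw [← Finset.sum_neg_distrib]
    refine Finset.sum_le_sum fun i _ => ?_
    rw [← neg_mul]
    exact mul_le_mul_of_nonneg_right (hφf i) (hp i)
  have h2 : ∑ i, f i * q i ≤ ∑ i, ψ i * q i :=
    Finset.sum_le_sum fun i _ => mul_le_mul_of_nonneg_right (hfψ i) (hq i)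
  linarith

lemma exists_probabilityMeasure_smul_eq_restrict {X : Type*} [MeasurableSpace X]
    (μ : Measure X) [IsProbabilityMeasure μ] {A : Set X} (hA : MeasurableSet A) :
    ∃ ρ : Measure X, IsProbabilityMeasure ρ ∧ μ A • ρ = μ.restrict A ∧
      (μ A ≠ 0 → ∀ᵐ x ∂ρ, x ∈ A) := by
  by_cases h : μ A = 0
  · exact ⟨μ, inferInstance, by simp [h, Measure.restrict_eq_zero.2 h], fun h' => (h' h).elim⟩
  · refine ⟨μ[|A], cond_isProbabilityMeasure h, ?_, fun _ => ae_cond_mem hA⟩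
    rw [ProbabilityTheory.cond, smul_smul, ENNReal.mul_inv_cancel h (measure_ne_top μ A), one_smul]

/-- A bounded Lipschitz extension of a Lipschitz function on a finite set (McShane). -/
lemma exists_bounded_lipschitz_extension {X : Type*} [MeasurableSpace X] {c : X → X → ℝ}
    (hcm : ∀ y, Measurable fun x => c x y) (hc0 : ∀ x, c x x = 0) (hcn : ∀ x y, 0 ≤ c x y)
    (hctri : ∀ x y z, c x z ≤ c x y + c y z) {s : Finset X} (hs : s.Nonempty) (f : s → ℝ)
    (hf : ∀ i j, f i - f j ≤ c i j) :
    ∃ F : X → ℝ, Measurable F ∧ (∃ M, ∀ x, |F x| ≤ M) ∧ (∀ x y, F x - F y ≤ c x y) ∧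
      ∀ i : s, F i = f i := by
  have : Nonempty s := hs.to_subtype
  let A : ℝ := ∑ i, |f i|
  have hA : ∀ i, |f i| ≤ A := fun i =>
    Finset.single_le_sum (f := fun k => |f k|) (fun k _ => abs_nonneg _) (Finset.mem_univ i)
  let F₀ : X → ℝ := fun x => ⨅ i : s, (f i + c x i)
  have hF₀m : Measurable F₀ := Measurable.iInf fun i => (hcm i).const_add _
  have hF₀ge : ∀ x, -A ≤ F₀ x := fun x => by
    refine le_ciInf fun i => ?_
    have h1 := hA i
    have h2 := neg_abs_le (f i)
    have h3 := hcn x i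
    linarith
  have hF₀Lip : ∀ x y, F₀ x ≤ F₀ y + c x y := by
    intro x y
    rw [← sub_le_iff_le_add]
    refine le_ciInf fun i => ?_
    have h1 : F₀ x ≤ f i + c x i := ciInf_le (Set.finite_range _).bddBelow i
    have h2 := hctri x y i
    linarith
  have hF₀s : ∀ i : s, F₀ i = f i := fun i => by
    refine le_antisymm ?_ (le_ciInf fun j => ?_)
    · simpa [hc0] using ciInf_le (Set.finite_range fun j : s => f j + c i j).bddBelow i
    · have := hf i j
      linarith
  refine ⟨fun x => min (F₀ x) A, hF₀m.min measurable_const, ⟨A, fun x => ?_⟩, fun x y => ?_,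
    fun i => ?_⟩
  · have hA0 : 0 ≤ A := Finset.sum_nonneg fun i _ => abs_nonneg _
    exact abs_le.2 ⟨le_min (hF₀ge x) (by linarith), min_le_right _ _⟩
  · rw [sub_le_iff_le_add']
    beta_reduce
    rcases le_total (F₀ y) A with h | h
    · rw [min_eq_left h]
      exact (min_le_left _ _).trans (hF₀Lip x y)
    · rw [min_eq_right h]
      exact (min_le_right _ _).trans (by linarith [hcn x y])
  · simp only [hF₀s]
    exact min_eq_left ((le_abs_self _).trans (hA i))

lemma integral_comp_simpleFunc_eq_sum {X : Type*} [MeasurableSpace X] (μ : Measure X)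
    [IsProbabilityMeasure μ] (T : SimpleFunc X X) (F : X → ℝ) :
    ∫ x, F (T x) ∂μ = ∑ i : T.range, F i * μ.real (T ⁻¹' {(i : X)}) := by
  classical
  have h : ∀ x, F (T x) = ∑ i : T.range, (T ⁻¹' {(i : X)}).indicator (fun _ => F i) x := by
    intro x
    rw [Finset.sum_eq_single (⟨T x, T.mem_range_self x⟩ : T.range)]
    · simp
    · intro i _ hi
      refine Set.indicator_of_notMem (fun hx => hi ?_) _
      exact Subtype.ext hx.symm
    · simp
  simp_rw [h]
  rw [integral_finsetSum _ fun i _ => (integrable_const _).indicator (T.measurableSet_fiber _)]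
  refine Finset.sum_congr rfl fun i _ => ?_
  rw [integral_indicator_const _ (T.measurableSet_fiber _), smul_eq_mul, mul_comm]

/-- Kantorovich–Rubinstein duality up to the error made by a finitely valued approximation of the
identity. -/
lemma wassersteinDist_le_of_simpleFunc {X : Type*} [MeasurableSpace X] {c : X → X → ℝ}
    (hcm : Measurable (Function.uncurry c)) (hc0 : ∀ x, c x x = 0) (hcn : ∀ x y, 0 ≤ c x y)
    (hcs : ∀ x y, c x y = c y x) (hctri : ∀ x y z, c x z ≤ c x y + c y z)
    {μ ν : Measure X} [IsProbabilityMeasure μ] [IsProbabilityMeasure ν] {L : ℝ}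
    (hdual : ∀ f : X → ℝ, Measurable f → (∃ M, ∀ x, |f x| ≤ M) →
      (∀ x y, f x - f y ≤ c x y) → ∫ x, f x ∂μ - ∫ x, f x ∂ν ≤ L)
    {δ : ℝ} (hδ : 0 ≤ δ) (T : SimpleFunc X X)
    (hμ : ∫⁻ x, ENNReal.ofReal (c x (T x)) ∂μ ≤ ENNReal.ofReal δ)
    (hν : ∫⁻ x, ENNReal.ofReal (c x (T x)) ∂ν ≤ ENNReal.ofReal δ) :
    wassersteinDist 1 c μ ν ≤ ENNReal.ofReal (L + 4 * δ) := by
  classical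
  have : Nonempty X := nonempty_of_isProbabilityMeasure μ
  have hrange : T.range.Nonempty := ⟨_, T.mem_range_self (Classical.arbitrary X)⟩
  have : Nonempty T.range := hrange.to_subtype
  have hcT : Measurable fun x => c x (T x) := hcm.comp (measurable_id.prodMk T.measurable)
  have approx : ∀ (ρ : Measure X) [IsProbabilityMeasure ρ],
      ∫⁻ x, ENNReal.ofReal (c x (T x)) ∂ρ ≤ ENNReal.ofReal δ → ∀ f : X → ℝ, Measurable f →
      (∃ M, ∀ x, |f x| ≤ M) → (∀ x y, f x - f y ≤ c x y) →
      |∫ x, f x ∂ρ - ∫ x, f (T x) ∂ρ| ≤ δ := by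
    intro ρ _ hρ f hf ⟨M, hM⟩ hLip
    have hi1 : Integrable f ρ := integrable_of_bounded hf hM
    have hi2 : Integrable (fun x => f (T x)) ρ :=
      integrable_of_bounded (hf.comp T.measurable) fun x => hM _
    rw [← integral_sub hi1 hi2]
    refine (abs_integral_le_integral_abs).trans ?_
    rw [← ENNReal.ofReal_le_ofReal_iff hδ]
    refine (ofReal_integral_le_lintegral_ofReal (hi1.sub hi2).abs).trans
      ((lintegral_mono fun x => ENNReal.ofReal_le_ofReal ?_).trans hρ)
    refine abs_le.2 ⟨?_, hLip _ _⟩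
    have := hLip (T x) x
    rw [hcs] at this
    simp only [Pi.sub_apply]
    linarith
  have total : ∀ (ρ : Measure X) (B : Set X),
      ∑ i : T.range, (ρ.restrict (T ⁻¹' {(i : X)})) B = ρ B := by
    intro ρ B
    rw [Finset.sum_coe_sort T.range fun i => (ρ.restrict (T ⁻¹' {i})) B]
    simp_rw [Measure.restrict_apply' (T.measurableSet_fiber _), Set.inter_comm B]
    simp_rw [← Measure.restrict_apply (T.measurableSet_fiber _)]
    rw [sum_measure_preimage_singleton _ fun y _ => T.measurableSet_fiber y]
    have : T ⁻¹' (T.range : Set X) = Set.univ := by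
      ext x
      simp
    rw [this, Measure.restrict_apply_univ]
  let p : T.range → ℝ := fun i => μ.real (T ⁻¹' {(i : X)})
  let q : T.range → ℝ := fun i => ν.real (T ⁻¹' {(i : X)})
  have hp1 : ∑ i, p i = 1 := by
    simpa using (integral_comp_simpleFunc_eq_sum μ T fun _ => 1).symm
  have hq1 : ∑ i, q i = 1 := by
    simpa using (integral_comp_simpleFunc_eq_sum ν T fun _ => 1).symm
  obtain ⟨π, hπ0, hπp, hπq, hπc⟩ := exists_transport_plan_of_lipschitz
    (fun i j : T.range => c i j) (fun i => hc0 i) (fun i j k => hctri i j k) p q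
    (fun i => measureReal_nonneg) (fun i => measureReal_nonneg) (hp1.trans hq1.symm)
    (L + 2 * δ) (by
      intro f hf
      obtain ⟨F, hFm, hFb, hFLip, hFf⟩ := exists_bounded_lipschitz_extension
        (fun y => hcm.comp (measurable_id.prodMk measurable_const)) hc0 hcn hctri hrange f hf
      have h1 := abs_le.1 (approx μ hμ F hFm hFb hFLip)
      have h2 := abs_le.1 (approx ν hν F hFm hFb hFLip)
      have h3 := hdual F hFm hFb hFLip
      rw [integral_comp_simpleFunc_eq_sum] at h1 h2
      simp only [hFf] at h1 h2
      simp only [p, q]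
      linarith [h1.1, h2.2])
  choose μ' hμ'p hμ' hμ'ae using fun i : T.range =>
    exists_probabilityMeasure_smul_eq_restrict μ (T.measurableSet_fiber (i : X))
  choose ν' hν'p hν' hν'ae using fun i : T.range =>
    exists_probabilityMeasure_smul_eq_restrict ν (T.measurableSet_fiber (i : X))
  let Q : Measure (X × X) := ∑ i, ∑ j, ENNReal.ofReal (π i j) • (μ' i).prod (ν' j)
  have hsum1 : ∀ i, ∑ j, ENNReal.ofReal (π i j) = μ (T ⁻¹' {(i : X)}) := fun i => by
    rw [← ENNReal.ofReal_sum_of_nonneg fun j _ => hπ0 i j, hπp]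
    exact ofReal_measureReal
  have hsum2 : ∀ j, ∑ i, ENNReal.ofReal (π i j) = ν (T ⁻¹' {(j : X)}) := fun j => by
    rw [← ENNReal.ofReal_sum_of_nonneg fun i _ => hπ0 i j, hπq]
    exact ofReal_measureReal
  have hQ1 : Q.map Prod.fst = μ := by
    ext B hB
    rw [Measure.map_apply measurable_fst hB, ← total μ B]
    simp only [Q, Measure.finsetSum_apply, Measure.smul_apply]
    refine Finset.sum_congr rfl fun i _ => ?_
    have : ∀ j, ((μ' i).prod (ν' j)) (Prod.fst ⁻¹' B) = μ' i B := fun j => by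
      rw [← Set.prod_univ, Measure.prod_prod, measure_univ, mul_one]
    simp only [this, smul_eq_mul]
    rw [← Finset.sum_mul, hsum1, ← hμ' i, Measure.smul_apply, smul_eq_mul]
  have hQ2 : Q.map Prod.snd = ν := by
    ext B hB
    rw [Measure.map_apply measurable_snd hB, ← total ν B]
    simp only [Q, Measure.finsetSum_apply, Measure.smul_apply]
    rw [Finset.sum_comm]
    refine Finset.sum_congr rfl fun j _ => ?_
    have : ∀ i, ((μ' i).prod (ν' j)) (Prod.snd ⁻¹' B) = ν' j B := fun i => by
      rw [← Set.univ_prod, Measure.prod_prod, measure_univ, one_mul]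
    simp only [this, smul_eq_mul]
    rw [← Finset.sum_mul, hsum2, ← hν' j, Measure.smul_apply, smul_eq_mul]
  have hmid : ∫⁻ z, ENNReal.ofReal (c (T z.1) (T z.2)) ∂Q ≤ ENNReal.ofReal (L + 2 * δ) := by
    simp only [Q, lintegral_finsetSum_measure, lintegral_smul_measure, smul_eq_mul]
    have : ∀ i j, ENNReal.ofReal (π i j) *
        ∫⁻ z, ENNReal.ofReal (c (T z.1) (T z.2)) ∂(μ' i).prod (ν' j) =
        ENNReal.ofReal (π i j * c i j) := by
      intro i j
      rw [ENNReal.ofReal_mul (hπ0 i j)]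
      by_cases hz : ENNReal.ofReal (π i j) = 0
      · simp [hz]
      congr 1
      have hi : μ (T ⁻¹' {(i : X)}) ≠ 0 := fun h0 => hz <| by
        rw [← hsum1 i, Finset.sum_eq_zero_iff] at h0
        exact h0 j (Finset.mem_univ j)
      have hj : ν (T ⁻¹' {(j : X)}) ≠ 0 := fun h0 => hz <| by
        rw [← hsum2 j, Finset.sum_eq_zero_iff] at h0
        exact h0 i (Finset.mem_univ i)
      have h1 : ∀ᵐ z ∂(μ' i).prod (ν' j), T z.1 = i :=
        Measure.quasiMeasurePreserving_fst.ae (hμ'ae i hi)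
      have h2 : ∀ᵐ z ∂(μ' i).prod (ν' j), T z.2 = j :=
        Measure.quasiMeasurePreserving_snd.ae (hν'ae j hj)
      rw [lintegral_congr_ae (g := fun _ => ENNReal.ofReal (c i j))]
      · simp
      · filter_upwards [h1, h2] with z hz1 hz2
        rw [hz1, hz2]
    simp only [this]
    rw [Finset.sum_congr rfl fun i _ => (ENNReal.ofReal_sum_of_nonneg
      fun j _ => mul_nonneg (hπ0 i j) (hcn i j)).symm,
      ← ENNReal.ofReal_sum_of_nonneg fun i _ => Finset.sum_nonneg
      fun j _ => mul_nonneg (hπ0 i j) (hcn i j)]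
    exact ENNReal.ofReal_le_ofReal hπc
  have hL : 0 ≤ L := by
    simpa using hdual (fun _ => 0) measurable_const ⟨0, by simp⟩ (by simpa using hcn)
  have hcT' : Measurable fun x => ENNReal.ofReal (c x (T x)) := hcT.ennreal_ofReal
  refine (iInf₂_le Q ⟨hQ1, hQ2⟩).trans ?_
  simp only [ENNReal.rpow_one, div_one]
  calc ∫⁻ z, ENNReal.ofReal (c z.1 z.2) ∂Q
      ≤ ∫⁻ z, (ENNReal.ofReal (c z.1 (T z.1)) + ENNReal.ofReal (c (T z.1) (T z.2)) +
          ENNReal.ofReal (c z.2 (T z.2))) ∂Q := by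
        refine lintegral_mono fun z => ?_
        rw [← ENNReal.ofReal_add (hcn _ _) (hcn _ _),
          ← ENNReal.ofReal_add (add_nonneg (hcn _ _) (hcn _ _)) (hcn _ _)]
        refine ENNReal.ofReal_le_ofReal ?_
        have h1 := hctri z.1 (T z.1) z.2
        have h2 := hctri (T z.1) (T z.2) z.2
        rw [hcs (T z.2)] at h2
        linarith
    _ = ∫⁻ x, ENNReal.ofReal (c x (T x)) ∂μ + ∫⁻ z, ENNReal.ofReal (c (T z.1) (T z.2)) ∂Q +
          ∫⁻ x, ENNReal.ofReal (c x (T x)) ∂ν := by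
        have m1 : Measurable fun z : X × X => ENNReal.ofReal (c z.1 (T z.1)) :=
          hcT'.comp measurable_fst
        have m2 : Measurable fun z : X × X => ENNReal.ofReal (c z.2 (T z.2)) :=
          hcT'.comp measurable_snd
        rw [lintegral_add_right _ m2, lintegral_add_left m1]
        have e1 := lintegral_map (μ := Q) hcT' measurable_fst
        have e2 := lintegral_map (μ := Q) hcT' measurable_snd
        rw [hQ1] at e1
        rw [hQ2] at e2
        rw [e1, e2]
    _ ≤ ENNReal.ofReal δ + ENNReal.ofReal (L + 2 * δ) + ENNReal.ofReal δ := by gcongr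
    _ = ENNReal.ofReal (L + 4 * δ) := by
        rw [← ENNReal.ofReal_add hδ (by positivity), ← ENNReal.ofReal_add (by positivity) hδ]
        congr 1
        ring

lemma lintegral_ofReal_le_of_tendsto {X : Type*} [MeasurableSpace X] {μ : Measure X}
    {F : X → ℝ} {G : ℕ → X → ℝ} (hG : ∀ k, Integrable (G k) μ) (hGm : ∀ k, Measurable (G k))
    (hG0 : ∀ k x, 0 ≤ G k x)
    (hlim : ∀ x, Filter.Tendsto (fun k => G k x) Filter.atTop (nhds (F x)))
    {B : ℝ} (hB : ∀ k, ∫ x, G k x ∂μ ≤ B) :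
    ∫⁻ x, ENNReal.ofReal (F x) ∂μ ≤ ENNReal.ofReal B := by
  have h : ∀ x, ENNReal.ofReal (F x) =
      Filter.liminf (fun k => ENNReal.ofReal (G k x)) Filter.atTop := fun x =>
    ((ENNReal.continuous_ofReal.tendsto _).comp (hlim x)).liminf_eq.symm
  simp_rw [h]
  refine (lintegral_liminf_le fun k => (hGm k).ennreal_ofReal).trans ?_
  refine Filter.liminf_le_of_le (by isBoundedDefault) fun b hb => ?_
  obtain ⟨k, hk⟩ := hb.exists
  refine hk.trans ?_
  rw [← ofReal_integral_eq_lintegral_ofReal (hG k) (ae_of_all _ (hG0 k))]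
  exact ENNReal.ofReal_le_ofReal (hB k)

lemma tendsto_min_natCast (a : ℝ) :
    Filter.Tendsto (fun k : ℕ => min a (k : ℝ)) Filter.atTop (nhds a) := by
  refine tendsto_const_nhds.congr' ?_
  filter_upwards [Filter.eventually_ge_atTop ⌈a⌉₊] with k hk
  rw [min_eq_left (Nat.ceil_le.1 hk)]

/-- Kantorovich–Rubinstein duality for a cost comparable to the metric of a separable space. -/
lemma wassersteinDist_le_of_dual {X : Type*} [PseudoMetricSpace X] [SecondCountableTopology X]
    [MeasurableSpace X] [BorelSpace X] {c : X → X → ℝ}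
    (hcm : Measurable (Function.uncurry c)) (hc0 : ∀ x, c x x = 0)
    (hcs : ∀ x y, c x y = c y x) (hctri : ∀ x y z, c x z ≤ c x y + c y z)
    (hcl : ∀ x y, dist x y ≤ c x y) {N : ℝ} (hcu : ∀ x y, c x y ≤ N * dist x y)
    {μ ν : Measure X} [IsProbabilityMeasure μ] [IsProbabilityMeasure ν] {L : ℝ}
    (hdual : ∀ f : X → ℝ, Measurable f → (∃ M, ∀ x, |f x| ≤ M) →
      (∀ x y, f x - f y ≤ c x y) → ∫ x, f x ∂μ - ∫ x, f x ∂ν ≤ L)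
    (x₀ : X) (hμ : Integrable (fun x => c x x₀) μ) :
    wassersteinDist 1 c μ ν ≤ ENNReal.ofReal L := by
  have hcn : ∀ x y, 0 ≤ c x y := fun x y => dist_nonneg.trans (hcl x y)
  have hcx : Measurable fun x => c x x₀ := hcm.comp (measurable_id.prodMk measurable_const)
  have hbdd : ∀ (k : ℕ) x, |min (c x x₀) (k : ℝ)| ≤ k := fun k x => by
    rw [abs_of_nonneg (le_min (hcn _ _) k.cast_nonneg)]
    exact min_le_right _ _
  have hmeas : ∀ k : ℕ, Measurable fun x => min (c x x₀) (k : ℝ) := fun k =>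
    hcx.min measurable_const
  have hνle : ∫⁻ x, ENNReal.ofReal (c x x₀) ∂ν ≤ ENNReal.ofReal (L + ∫ x, c x x₀ ∂μ) := by
    refine lintegral_ofReal_le_of_tendsto (G := fun k x => min (c x x₀) (k : ℝ))
      (fun k => integrable_of_bounded (hmeas k) (hbdd k)) hmeas
      (fun k x => le_min (hcn _ _) k.cast_nonneg) (fun x => tendsto_min_natCast _) fun k => ?_
    have h1 := hdual (fun x => -min (c x x₀) (k : ℝ)) (hmeas k).neg
      ⟨k, fun x => by rw [abs_neg]; exact hbdd k x⟩ fun x y => by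
        have h2 := hctri y x x₀
        rw [hcs y x] at h2
        have : min (c y x₀) (k : ℝ) ≤ c x y + min (c x x₀) k := by
          rw [← min_add_add_left]
          exact min_le_min h2 (le_add_of_nonneg_left (hcn _ _))
        linarith
    rw [integral_neg, integral_neg] at h1
    have h2 : ∫ x, min (c x x₀) (k : ℝ) ∂μ ≤ ∫ x, c x x₀ ∂μ :=
      integral_mono (integrable_of_bounded (hmeas k) (hbdd k)) hμ fun x => min_le_left _ _
    linarith
  have hfin : ∀ ρ : Measure X, ∫⁻ x, ENNReal.ofReal (c x x₀) ∂ρ ≠ ∞ →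
      Filter.Tendsto (fun k => ∫⁻ x, ENNReal.ofReal (c x (SimpleFunc.approxOn id measurable_id
        Set.univ x₀ (Set.mem_univ _) k x)) ∂ρ) Filter.atTop (nhds 0) := by
    intro ρ hρ
    have key : ∀ x y, ENNReal.ofReal (c x y) ≤ ENNReal.ofReal N * edist x y := fun x y => by
      rw [edist_dist, ← ENNReal.ofReal_mul' dist_nonneg]
      exact ENNReal.ofReal_le_ofReal (hcu x y)
    have := tendsto_lintegral_of_dominated_convergence (μ := ρ) (f := fun _ => 0)
      (F := fun k x => ENNReal.ofReal (c x (SimpleFunc.approxOn id measurable_id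
        Set.univ x₀ (Set.mem_univ _) k x))) (fun x => ENNReal.ofReal N * edist x x₀)
      (fun k => (hcm.comp (measurable_id.prodMk (SimpleFunc.measurable _))).ennreal_ofReal)
      (fun k => ae_of_all _ fun x => (key _ _).trans ?_) ?_ (ae_of_all _ fun x => ?_)
    · simpa using this
    · refine mul_le_mul' le_rfl ?_
      rw [edist_comm, edist_comm x x₀]
      exact SimpleFunc.edist_approxOn_le measurable_id (Set.mem_univ _) x k
    · rw [lintegral_const_mul _ (by fun_prop)]
      refine ENNReal.mul_ne_top ENNReal.ofReal_ne_top (ne_top_of_le_ne_top hρ ?_)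
      refine lintegral_mono fun x => ?_
      rw [edist_dist]
      exact ENNReal.ofReal_le_ofReal (hcl _ _)
    · have h1 := SimpleFunc.tendsto_approxOn (f := (id : X → X)) measurable_id (Set.mem_univ x₀)
        (x := x) (by simp)
      have h2 := (ENNReal.Tendsto.const_mul (tendsto_const_nhds (x := x)|>.edist h1)
        (.inr ENNReal.ofReal_ne_top) : Filter.Tendsto _ _ (nhds (ENNReal.ofReal N * _)))
      simp only [id, edist_self, mul_zero] at h2
      exact tendsto_of_tendsto_of_tendsto_of_le_of_le tendsto_const_nhds h2
        (fun _ => zero_le) fun _ => key _ _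
  have hμt := hfin μ <| by
    rw [← ofReal_integral_eq_lintegral_ofReal hμ (ae_of_all _ fun x => hcn _ _)]
    exact ENNReal.ofReal_ne_top
  have hνt := hfin ν (ne_top_of_le_ne_top ENNReal.ofReal_ne_top hνle)
  refine ENNReal.le_of_forall_pos_le_add fun ε hε _ => ?_
  have hε' : 0 < ENNReal.ofReal ((ε : ℝ) / 4) := ENNReal.ofReal_pos.2 (by positivity)
  obtain ⟨k, hk1, hk2⟩ := ((hμt.eventually_le_const hε').and (hνt.eventually_le_const hε')).exists
  refine (wassersteinDist_le_of_simpleFunc hcm hc0 hcn hcs hctri hdual (by positivity) _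
    hk1 hk2).trans ?_
  rw [mul_div_cancel₀ _ (by norm_num)]
  refine ENNReal.ofReal_add_le.trans ?_
  rw [ENNReal.ofReal_coe_nnreal]

end Kantorovich

section Chain

variable {E : Type*} [MeasurableSpace E]

lemma measurable_finSnoc (n : ℕ) :
    Measurable fun p : (Fin n → E) × E => (Fin.snoc p.1 p.2 : Fin (n + 1) → E) := by
  refine measurable_pi_iff.2 fun i => ?_
  refine Fin.lastCases ?_ (fun j => ?_) i
  · simpa using measurable_snd
  · simpa [Function.comp_def] using (measurable_pi_apply j).comp measurable_fst

lemma measurable_finAppend (k m : ℕ) :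
    Measurable fun p : (Fin k → E) × (Fin m → E) => Fin.append p.1 p.2 := by
  refine measurable_pi_iff.2 fun i => ?_
  refine Fin.addCases (fun j => ?_) (fun j => ?_) i
  · simpa [Function.comp_def] using (measurable_pi_apply j).comp measurable_fst
  · simpa [Function.comp_def] using (measurable_pi_apply j).comp measurable_snd

variable {K : (i : ℕ) → (Fin i → E) → Measure E}

lemma measurable_map_finSnoc (hKm : ∀ i, Measurable (K i))
    (hKp : ∀ i x, IsProbabilityMeasure (K i x)) (n : ℕ) :
    Measurable fun x => (K n x).map (Fin.snoc (α := fun _ => E) x) := by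
  have : IsMarkovKernel (⟨K n, hKm n⟩ : Kernel (Fin n → E) E) := ⟨hKp n⟩
  refine Measure.measurable_of_measurable_coe _ fun s hs => ?_
  have h := Kernel.measurable_kernel_prodMk_left (κ := ⟨K n, hKm n⟩) (measurable_finSnoc n hs)
  refine (congrArg Measurable (funext fun x => ?_)).mpr h
  exact Measure.map_apply ((measurable_finSnoc n).comp measurable_prodMk_left) hs

lemma isProbabilityMeasure_chainMeasure (hKm : ∀ i, Measurable (K i))
    (hKp : ∀ i x, IsProbabilityMeasure (K i x)) (n : ℕ) :
    IsProbabilityMeasure (chainMeasure K n) := by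
  induction n with
  | zero => exact Measure.dirac.isProbabilityMeasure
  | succ n ih =>
    refine isProbabilityMeasure_bind (measurable_map_finSnoc hKm hKp n).aemeasurable
      (ae_of_all _ fun x => ?_)
    exact Measure.isProbabilityMeasure_map
      ((measurable_finSnoc n).comp measurable_prodMk_left).aemeasurable

lemma measurable_comp_append (hKm : ∀ i, Measurable (K i)) (k : ℕ) (x : Fin k → E) (i : ℕ) :
    Measurable fun y : Fin i → E => K (k + i) (Fin.append x y) :=
  (hKm _).comp ((measurable_finAppend k i).comp measurable_prodMk_left)

lemma isProbabilityMeasure_futureChain (hKm : ∀ i, Measurable (K i))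
    (hKp : ∀ i x, IsProbabilityMeasure (K i x)) (k : ℕ) (x : Fin k → E) (m : ℕ) :
    IsProbabilityMeasure (futureChain K k x m) :=
  isProbabilityMeasure_chainMeasure (measurable_comp_append hKm k x) (fun _ _ => hKp _ _) m

lemma integral_chainMeasure_succ (hKm : ∀ i, Measurable (K i))
    (hKp : ∀ i x, IsProbabilityMeasure (K i x)) (n : ℕ) {F : (Fin (n + 1) → E) → ℝ}
    (hF : Measurable F) {M : ℝ} (hM : ∀ x, |F x| ≤ M) :
    ∫ x, F x ∂chainMeasure K (n + 1) =
      ∫ x, ∫ y, F (Fin.snoc x y) ∂K n x ∂chainMeasure K n := by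
  have := isProbabilityMeasure_chainMeasure hKm hKp (n + 1)
  have h := Kernel.integral_comp (κ := Kernel.const Unit (chainMeasure K n))
    (η := ⟨_, measurable_map_finSnoc hKm hKp n⟩) (a := ()) (f := F) (by
      rw [Kernel.comp_apply]
      exact integrable_of_bounded (μ := chainMeasure K (n + 1)) hF hM)
  rw [Kernel.comp_apply] at h
  refine h.trans (integral_congr_ae (ae_of_all _ fun x => ?_))
  exact integral_map ((measurable_finSnoc n).comp measurable_prodMk_left).aemeasurable
    hF.aestronglyMeasurable

lemma integral_futureChain_succ (hKm : ∀ i, Measurable (K i))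
    (hKp : ∀ i x, IsProbabilityMeasure (K i x)) (k m : ℕ) (x : Fin k → E)
    {F : (Fin (k + (m + 1)) → E) → ℝ} (hF : Measurable F) {M : ℝ} (hM : ∀ x, |F x| ≤ M) :
    ∫ u, F (Fin.append x u) ∂futureChain K k x (m + 1) =
      ∫ u, ∫ y, F (Fin.snoc (α := fun _ => E) (Fin.append x u) y) ∂K (k + m) (Fin.append x u)
        ∂futureChain K k x m := by
  have h := integral_chainMeasure_succ (measurable_comp_append hKm k x) (fun _ _ => hKp _ _) m
    (F := fun u => F (Fin.append x u))
    (hF.comp ((measurable_finAppend k (m + 1)).comp measurable_prodMk_left)) fun u => hM _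
  simp only [Fin.append_snoc] at h
  exact h

lemma measurable_integral_snoc (hKm : ∀ i, Measurable (K i))
    (hKp : ∀ i x, IsProbabilityMeasure (K i x)) (n : ℕ) {F : (Fin (n + 1) → E) → ℝ}
    (hF : Measurable F) : Measurable fun x => ∫ y, F (Fin.snoc x y) ∂K n x := by
  have : IsMarkovKernel (⟨K n, hKm n⟩ : Kernel (Fin n → E) E) := ⟨hKp n⟩
  exact (StronglyMeasurable.integral_kernel_prod_right' (κ := ⟨K n, hKm n⟩)
    (hF.comp (measurable_finSnoc n)).stronglyMeasurable).measurable

/-- The martingale method: if the conditional expectations of `F` are Lipschitz in the last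
revealed coordinate, the transport inequality for the conditional laws bounds the exponential
moment of `F`. -/
lemma integral_exp_chainMeasure_le {d : E → E → ℝ} {C : ℝ} (hC : 0 < C)
    (hKm : ∀ i, Measurable (K i)) (hKp : ∀ i x, IsProbabilityMeasure (K i x))
    (hT : ∀ i x, TpIneq 1 d C (K i x)) {L : ℝ} (hL : 0 < L) (n : ℕ) {F : (Fin n → E) → ℝ}
    (hF : Measurable F) {M : ℝ} (hM : ∀ x, |F x| ≤ M)
    (hLip : ∀ k m (e : n = k + 1 + m) (x : Fin k → E) (y z : E),
      ∫ u, F (Fin.append (Fin.snoc x z : Fin (k + 1) → E) u ∘ Fin.cast e)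
          ∂futureChain K (k + 1) (Fin.snoc x z) m -
        ∫ u, F (Fin.append (Fin.snoc x y : Fin (k + 1) → E) u ∘ Fin.cast e)
          ∂futureChain K (k + 1) (Fin.snoc x y) m ≤ L * d y z) :
    ∫ x, Real.exp (F x) ∂chainMeasure K n ≤
      Real.exp (∫ x, F x ∂chainMeasure K n + n * (C * L ^ 2 / 2)) := by
  induction n with
  | zero =>
    simp only [chainMeasure, Nat.cast_zero, zero_mul, add_zero]
    rw [integral_dirac' _ _ hF.exp.stronglyMeasurable, integral_dirac' _ _ hF.stronglyMeasurable]
  | succ n ih =>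
    have := isProbabilityMeasure_chainMeasure hKm hKp n
    have hexpM : ∀ x, |Real.exp (F x)| ≤ Real.exp M := fun x => by
      rw [Real.abs_exp]
      exact Real.exp_le_exp.2 ((le_abs_self _).trans (hM x))
    have hAm := measurable_integral_snoc hKm hKp n hF
    have hAM : ∀ x, |∫ y, F (Fin.snoc x y) ∂K n x| ≤ M := fun x =>
      abs_integral_le_of_bounded fun y => hM _
    have hih := ih hAm hAM fun k m e x y z => by
      have h := hLip k (m + 1) (by omega) x y z
      subst e
      have hs := fun w : E => integral_futureChain_succ hKm hKp (k + 1) m (Fin.snoc x w) hF hM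
      refine le_trans (le_of_eq ?_) h
      exact congrArg₂ (· - ·) (hs z).symm (hs y).symm
    have hstep : ∀ x, ∫ y, Real.exp (F (Fin.snoc x y)) ∂K n x ≤
        Real.exp (C * L ^ 2 / 2) * Real.exp (∫ y, F (Fin.snoc x y) ∂K n x) := fun x => by
      rw [← Real.exp_add, add_comm (C * L ^ 2 / 2)]
      refine (hT n x).integral_exp_le hC
        (hF.comp ((measurable_finSnoc n).comp measurable_prodMk_left)) (fun y => hM _) hL
        fun y z => ?_
      have h := hLip n 0 rfl x y z
      have hs : ∀ w : E, ∫ u : Fin 0 → E, F (Fin.append (m := n + 1) (n := 0) (Fin.snoc x w) u ∘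
            Fin.cast (rfl : n + 1 = n + 1 + 0))
          ∂futureChain K (n + 1) (Fin.snoc x w) 0 = F (Fin.snoc x w) := fun w => by
        have hmeas : Measurable fun u : Fin 0 → E =>
            F (Fin.append (m := n + 1) (n := 0) (Fin.snoc x w) u) :=
          hF.comp ((measurable_finAppend (n + 1) 0).comp measurable_prodMk_left)
        refine (integral_dirac' _ _ hmeas.stronglyMeasurable).trans ?_
        congr 1
        exact Fin.append_elim0 _
      rwa [hs, hs] at h
    rw [integral_chainMeasure_succ hKm hKp n hF.exp hexpM]
    calc ∫ x, ∫ y, Real.exp (F (Fin.snoc x y)) ∂K n x ∂chainMeasure K n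
        ≤ ∫ x, Real.exp (C * L ^ 2 / 2) * Real.exp (∫ y, F (Fin.snoc x y) ∂K n x)
            ∂chainMeasure K n :=
          integral_mono (integrable_of_bounded (measurable_integral_snoc hKm hKp n hF.exp)
              fun x => abs_integral_le_of_bounded fun y => hexpM _)
            ((integrable_exp_of_bounded hAm hAM).const_mul _) hstep
      _ ≤ Real.exp (C * L ^ 2 / 2) * Real.exp (∫ x, ∫ y, F (Fin.snoc x y) ∂K n x
            ∂chainMeasure K n + n * (C * L ^ 2 / 2)) := by
          rw [integral_const_mul]
          gcongr
      _ = _ := by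
          rw [integral_chainMeasure_succ hKm hKp n hF hM, ← Real.exp_add]
          push_cast
          ring_nf

end Chain

section Lipschitz

lemma abs_sub_le_sum_dist {E : Type*} [PseudoMetricSpace E] {n : ℕ} {F : (Fin n → E) → ℝ} {α : ℝ}
    (h : ∀ (x : Fin n → E) (k : Fin n) (y : E),
      |F x - F (Function.update x k y)| ≤ α * dist (x k) y) (x y : Fin n → E) :
    |F x - F y| ≤ α * ∑ i, dist (x i) (y i) := by
  have key : ∀ s : Finset (Fin n), |F x - F (s.piecewise y x)| ≤ α * ∑ i ∈ s, dist (x i) (y i) := by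
    intro s
    induction s using Finset.induction_on with
    | empty => simp
    | insert j s hj ih =>
      rw [Finset.piecewise_insert, Finset.sum_insert hj, mul_add, add_comm]
      have h1 := h (s.piecewise y x) j (y j)
      rw [Finset.piecewise_eq_of_notMem _ _ _ hj] at h1
      exact (abs_sub_le _ _ _).trans (add_le_add ih h1)
  simpa using key Finset.univ

lemma abs_clamp_sub_clamp_le (M a b : ℝ) :
    |max (-M) (min a M) - max (-M) (min b M)| ≤ |a - b| :=
  (abs_max_sub_max_le_max _ _ _ _).trans <| by
    rw [sub_self, abs_zero, max_eq_right (abs_nonneg _)]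
    refine (abs_min_sub_min_le_max _ _ _ _).trans ?_
    rw [sub_self, abs_zero, max_eq_left (abs_nonneg _)]

variable {E : Type*} [MeasurableSpace E] [PseudoMetricSpace E]
  {K : (i : ℕ) → (Fin i → E) → Measure E}

/-- Under a Lipschitz dependence of the law of the future on the present, the conditional
expectations of a Lipschitz function are Lipschitz in the last revealed coordinate. -/
lemma integral_futureChain_sub_le (hKm : ∀ i, Measurable (K i))
    (hKp : ∀ i x, IsProbabilityMeasure (K i x)) {S : ℝ} {k m : ℕ}
    (hfut : ∀ f : (Fin m → E) → ℝ, Measurable f → (∃ M : ℝ, ∀ u, |f u| ≤ M) →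
      (∀ u v : Fin m → E, |f u - f v| ≤ ∑ i, dist (u i) (v i)) → ∀ (x : Fin k → E) (y z : E),
        |(∫ u, f u ∂futureChain K (k + 1) (Fin.snoc x y) m) -
            ∫ u, f u ∂futureChain K (k + 1) (Fin.snoc x z) m| ≤ S * dist y z)
    {F : (Fin (k + 1 + m) → E) → ℝ} (hF : Measurable F) {M : ℝ} (hM : ∀ x, |F x| ≤ M)
    {β : ℝ} (hβ : 0 < β) (hLip : ∀ x y, |F x - F y| ≤ β * ∑ i, dist (x i) (y i))
    (x : Fin k → E) (y z : E) :
    ∫ u, F (Fin.append (Fin.snoc x z : Fin (k + 1) → E) u)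
        ∂futureChain K (k + 1) (Fin.snoc x z) m -
      ∫ u, F (Fin.append (Fin.snoc x y : Fin (k + 1) → E) u)
        ∂futureChain K (k + 1) (Fin.snoc x y) m ≤ β * (1 + S) * dist y z := by
  have := isProbabilityMeasure_futureChain hKm hKp (k + 1) (Fin.snoc x z) m
  have hmeas : ∀ w : E, Measurable fun u : Fin m → E =>
      F (Fin.append (Fin.snoc x w : Fin (k + 1) → E) u) := fun w =>
    hF.comp ((measurable_finAppend (k + 1) m).comp measurable_prodMk_left)
  have h1 : ∫ u, F (Fin.append (Fin.snoc x z : Fin (k + 1) → E) u)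
        ∂futureChain K (k + 1) (Fin.snoc x z) m ≤
      ∫ u, F (Fin.append (Fin.snoc x y : Fin (k + 1) → E) u)
        ∂futureChain K (k + 1) (Fin.snoc x z) m + β * dist y z := by
    have hi : ∀ w : E, Integrable (fun u => F (Fin.append (Fin.snoc x w : Fin (k + 1) → E) u))
        (futureChain K (k + 1) (Fin.snoc x z) m) := fun w =>
      integrable_of_bounded (hmeas w) fun u => hM _
    have h := integral_mono (hi z) ((hi y).add (integrable_const (β * dist y z))) fun u => by
      have h2 := (le_abs_self _).trans (hLip (Fin.append (Fin.snoc x z : Fin (k + 1) → E) u)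
        (Fin.append (Fin.snoc x y : Fin (k + 1) → E) u))
      simp only [Fin.sum_univ_add, Fin.append_left, Fin.append_right, dist_self,
        Finset.sum_const_zero, add_zero, Fin.sum_univ_castSucc, Fin.snoc_castSucc, Fin.snoc_last,
        zero_add] at h2
      simp only [Pi.add_apply]
      rw [dist_comm y z]
      linarith
    refine h.trans (le_of_eq ?_)
    simp only [Pi.add_apply]
    rw [integral_add (hi y) (integrable_const _)]
    simp
  have h2 := hfut (fun u => β⁻¹ * F (Fin.append (Fin.snoc x y : Fin (k + 1) → E) u))
    ((hmeas y).const_mul _) ⟨β⁻¹ * M, fun u => by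
      rw [abs_mul, abs_of_pos (inv_pos.2 hβ)]
      exact mul_le_mul_of_nonneg_left (hM _) (inv_pos.2 hβ).le⟩ (fun u v => by
      rw [← mul_sub, abs_mul, abs_of_pos (inv_pos.2 hβ), inv_mul_le_iff₀ hβ]
      refine (hLip _ _).trans (le_of_eq ?_)
      simp [Fin.sum_univ_add]) x z y
  rw [integral_const_mul, integral_const_mul, ← mul_sub, abs_mul, abs_of_pos (inv_pos.2 hβ),
    inv_mul_le_iff₀ hβ, dist_comm z y] at h2
  have h3 := (le_abs_self _).trans h2
  linarith

end Lipschitz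

section ExponentialMoments

variable {X : Type*} [MeasurableSpace X] {μ : Measure X} [IsProbabilityMeasure μ]

/-- A function whose truncations satisfy a uniform exponential moment bound is integrable. -/
lemma integrable_of_integral_exp_neg_le {F : X → ℝ} (hF : Measurable F) {B : ℝ}
    (h : ∀ k : ℕ, ∫ x, Real.exp (-min |F x| k) ∂μ ≤ Real.exp (-∫ x, min |F x| k ∂μ + B)) :
    Integrable F μ := by
  have hmeas : ∀ k : ℕ, Measurable fun x => min |F x| (k : ℝ) := fun k =>
    hF.abs.min measurable_const
  have hbdd : ∀ (k : ℕ) x, |min |F x| (k : ℝ)| ≤ k := fun k x => by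
    rw [abs_of_nonneg (le_min (abs_nonneg _) k.cast_nonneg)]
    exact min_le_right _ _
  have hi : Integrable (fun x => Real.exp (-|F x|)) μ :=
    integrable_of_bounded (M := 1) (by fun_prop) fun x => by
      rw [Real.abs_exp]
      exact Real.exp_le_one_iff.2 (neg_nonpos.2 (abs_nonneg _))
  have hpos := integral_exp_pos hi
  have hle : ∫⁻ x, ENNReal.ofReal |F x| ∂μ ≤
      ENNReal.ofReal (B - Real.log (∫ x, Real.exp (-|F x|) ∂μ)) := by
    refine lintegral_ofReal_le_of_tendsto (G := fun k x => min |F x| (k : ℝ))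
      (fun k => integrable_of_bounded (hmeas k) (hbdd k)) hmeas
      (fun k x => le_min (abs_nonneg _) k.cast_nonneg) (fun x => tendsto_min_natCast _) fun k => ?_
    have h1 : ∫ x, Real.exp (-|F x|) ∂μ ≤ ∫ x, Real.exp (-min |F x| k) ∂μ :=
      integral_mono hi (integrable_exp_of_bounded (hmeas k).neg
        fun x => (abs_neg _).trans_le (hbdd k x)) fun x =>
        Real.exp_le_exp.2 (neg_le_neg (min_le_left _ _))
    have h2 := (Real.log_le_iff_le_exp hpos).2 (h1.trans (h k))
    linarith
  refine ⟨hF.aestronglyMeasurable, ?_⟩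
  rw [hasFiniteIntegral_iff_norm]
  exact hle.trans_lt ENNReal.ofReal_lt_top

/-- A centered exponential moment bound passes from the truncations of an integrable function to
the function. -/
lemma integral_exp_le_of_clamp {F : X → ℝ} (hF : Measurable F) (hi : Integrable F μ) {l B : ℝ}
    (h : ∀ k : ℕ, ∫ x, Real.exp (l * (max (-(k : ℝ)) (min (F x) k) -
      ∫ z, max (-(k : ℝ)) (min (F z) k) ∂μ)) ∂μ ≤ B) :
    ∫ x, Real.exp (l * (F x - ∫ z, F z ∂μ)) ∂μ ≤ B := by
  have hmeas : ∀ k : ℕ, Measurable fun x => max (-(k : ℝ)) (min (F x) k) := fun k => by fun_prop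
  have hbdd : ∀ (k : ℕ) x, |max (-(k : ℝ)) (min (F x) k)| ≤ k := fun k x =>
    abs_le.2 ⟨le_max_left _ _, max_le ((neg_nonpos.2 k.cast_nonneg).trans k.cast_nonneg)
      (min_le_right _ _)⟩
  have hlim : ∀ x, Filter.Tendsto (fun k : ℕ => max (-(k : ℝ)) (min (F x) k)) Filter.atTop
      (nhds (F x)) := fun x => by
    refine tendsto_const_nhds.congr' ?_
    filter_upwards [Filter.eventually_ge_atTop ⌈|F x|⌉₊] with k hk
    have := abs_le.1 (Nat.ceil_le.1 hk)
    rw [min_eq_left this.2, max_eq_right this.1]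
  have hmean : Filter.Tendsto (fun k : ℕ => ∫ x, max (-(k : ℝ)) (min (F x) k) ∂μ) Filter.atTop
      (nhds (∫ x, F x ∂μ)) := by
    refine tendsto_integral_of_dominated_convergence (fun x => |F x|)
      (fun k => (hmeas k).aestronglyMeasurable) hi.abs (fun k => ae_of_all _ fun x => ?_)
      (ae_of_all _ hlim)
    simpa using abs_clamp_sub_clamp_le k (F x) 0
  have hB : 0 ≤ B := (integral_nonneg fun x => (Real.exp_pos _).le).trans (h 0)
  have hle := lintegral_ofReal_le_of_tendsto (μ := μ)
    (G := fun k x => Real.exp (l * (max (-(k : ℝ)) (min (F x) k) -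
      ∫ z, max (-(k : ℝ)) (min (F z) k) ∂μ))) (F := fun x => Real.exp (l * (F x - ∫ z, F z ∂μ)))
    (fun k => integrable_exp_of_bounded (M := |l| * (k + |∫ z, max (-(k : ℝ)) (min (F z) k) ∂μ|))
      (((hmeas k).sub_const _).const_mul _) fun x => by
        rw [abs_mul]
        exact mul_le_mul_of_nonneg_left ((abs_sub _ _).trans (add_le_add_left (hbdd k x) _))
          (abs_nonneg _))
    (fun k => (((hmeas k).sub_const _).const_mul _).exp) (fun k x => (Real.exp_pos _).le)
    (fun x => ((((hlim x).sub hmean).const_mul l).rexp)) h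
  rw [integral_eq_lintegral_of_nonneg_ae (ae_of_all _ fun x => (Real.exp_pos _).le)
    (by fun_prop)]
  exact ENNReal.toReal_le_of_le_ofReal hB hle

end ExponentialMoments

section Tensorization

variable {E : Type*} [MeasurableSpace E] [PseudoMetricSpace E]
  {K : (i : ℕ) → (Fin i → E) → Measure E}

/-- The centered exponential moment bound for bounded Lipschitz functions. -/
lemma integral_exp_chainMeasure_le_of_bounded {C : ℝ} (hC : 0 < C)
    (hKm : ∀ i, Measurable (K i)) (hKp : ∀ i x, IsProbabilityMeasure (K i x))
    (hT : ∀ i x, TpIneq 1 dist C (K i x)) {S : ℝ} (hS : 0 < S) {n : ℕ}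
    (hfut : ∀ k m, n = k + 1 + m → ∀ f : (Fin m → E) → ℝ, Measurable f →
      (∃ M : ℝ, ∀ u, |f u| ≤ M) →
      (∀ u v : Fin m → E, |f u - f v| ≤ ∑ i, dist (u i) (v i)) → ∀ (x : Fin k → E) (y z : E),
        |(∫ u, f u ∂futureChain K (k + 1) (Fin.snoc x y) m) -
            ∫ u, f u ∂futureChain K (k + 1) (Fin.snoc x z) m| ≤ S * dist y z)
    {F : (Fin n → E) → ℝ} (hF : Measurable F) {M : ℝ} (hM : ∀ x, |F x| ≤ M) {α : ℝ} (hα : 0 ≤ α)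
    (hLip : ∀ x y, |F x - F y| ≤ α * ∑ i, dist (x i) (y i)) (l : ℝ) :
    ∫ x, Real.exp (l * (F x - ∫ z, F z ∂chainMeasure K n)) ∂chainMeasure K n ≤
      Real.exp (C * l ^ 2 * (1 + S) ^ 2 * α ^ 2 * n / 2) := by
  have := isProbabilityMeasure_chainMeasure hKm hKp n
  rcases eq_or_ne l 0 with rfl | hl
  · simp
  rcases hα.eq_or_lt with rfl | hα
  · obtain ⟨x₀⟩ := nonempty_of_isProbabilityMeasure (chainMeasure K n)
    have hconst : ∀ x, F x = F x₀ := fun x => by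
      have := hLip x x₀
      rw [zero_mul, abs_nonpos_iff, sub_eq_zero] at this
      exact this
    simp [hconst]
  have hβ : 0 < |l| * α := mul_pos (abs_pos.2 hl) hα
  have h := integral_exp_chainMeasure_le hC hKm hKp hT (L := |l| * α * (1 + S)) (by positivity) n
    (F := fun x => l * F x) (hF.const_mul l) (M := |l| * M) (fun x => by
      rw [abs_mul]
      exact mul_le_mul_of_nonneg_left (hM x) (abs_nonneg l)) fun k m e x y z => by
        subst e
        exact integral_futureChain_sub_le hKm hKp (hfut k m rfl) (hF.const_mul l)
          (M := |l| * M) (fun x => by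
            rw [abs_mul]
            exact mul_le_mul_of_nonneg_left (hM x) (abs_nonneg l)) hβ (fun x y => by
            rw [← mul_sub, abs_mul, mul_assoc]
            exact mul_le_mul_of_nonneg_left (hLip x y) (abs_nonneg l)) x y z
  simp_rw [mul_sub, Real.exp_sub]
  rw [integral_div, div_le_iff₀ (Real.exp_pos _), ← Real.exp_add]
  rw [integral_const_mul] at h
  refine h.trans (le_of_eq ?_)
  rw [mul_pow, mul_pow, sq_abs]
  ring_nf

/-- Lipschitz functions, bounded or not, are integrable and satisfy the centered exponential moment
bound. -/
lemma integrable_and_integral_exp_chainMeasure_le {C : ℝ} (hC : 0 < C)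
    (hKm : ∀ i, Measurable (K i)) (hKp : ∀ i x, IsProbabilityMeasure (K i x))
    (hT : ∀ i x, TpIneq 1 dist C (K i x)) {S : ℝ} (hS : 0 < S) {n : ℕ}
    (hfut : ∀ k m, n = k + 1 + m → ∀ f : (Fin m → E) → ℝ, Measurable f →
      (∃ M : ℝ, ∀ u, |f u| ≤ M) →
      (∀ u v : Fin m → E, |f u - f v| ≤ ∑ i, dist (u i) (v i)) → ∀ (x : Fin k → E) (y z : E),
        |(∫ u, f u ∂futureChain K (k + 1) (Fin.snoc x y) m) -
            ∫ u, f u ∂futureChain K (k + 1) (Fin.snoc x z) m| ≤ S * dist y z)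
    {F : (Fin n → E) → ℝ} (hF : Measurable F) {α : ℝ} (hα : 0 ≤ α)
    (hLip : ∀ x y, |F x - F y| ≤ α * ∑ i, dist (x i) (y i)) :
    Integrable F (chainMeasure K n) ∧
    ∀ l : ℝ, ∫ x, Real.exp (l * (F x - ∫ z, F z ∂chainMeasure K n)) ∂chainMeasure K n ≤
      Real.exp (C * l ^ 2 * (1 + S) ^ 2 * α ^ 2 * n / 2) := by
  have := isProbabilityMeasure_chainMeasure hKm hKp n
  have hi : Integrable F (chainMeasure K n) := by
    refine integrable_of_integral_exp_neg_le hF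
      (B := C * (-1) ^ 2 * (1 + S) ^ 2 * α ^ 2 * n / 2) fun k => ?_
    have h := integral_exp_chainMeasure_le_of_bounded hC hKm hKp hT hS hfut
      (F := fun x => min |F x| k) (hF.abs.min measurable_const) (M := k) (fun x => by
        rw [abs_of_nonneg (le_min (abs_nonneg _) k.cast_nonneg)]
        exact min_le_right _ _) hα (fun x y => by
        refine ((abs_min_sub_min_le_max _ _ _ _).trans ?_).trans (hLip x y)
        rw [sub_self, abs_zero, max_eq_left (abs_nonneg _)]
        exact abs_abs_sub_abs_le _ _) (-1)
    simp_rw [mul_sub, Real.exp_sub] at h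
    rw [integral_div, div_le_iff₀ (Real.exp_pos _), ← Real.exp_add] at h
    simp only [neg_one_mul] at h
    rwa [add_comm]
  refine ⟨hi, fun l => integral_exp_le_of_clamp hF hi fun k => ?_⟩
  exact integral_exp_chainMeasure_le_of_bounded hC hKm hKp hT hS hfut (by fun_prop) (M := k)
    (fun x => abs_le.2 ⟨le_max_left _ _, max_le ((neg_nonpos.2 k.cast_nonneg).trans k.cast_nonneg)
      (min_le_right _ _)⟩) hα (fun x y => (abs_clamp_sub_clamp_le _ _ _).trans (hLip x y)) l

/-- Exponential moment bounds for bounded `1`-Lipschitz functions imply a transport inequality. -/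
lemma tpIneq_of_integral_exp_le {X : Type*} [PseudoMetricSpace X] [SecondCountableTopology X]
    [MeasurableSpace X] [BorelSpace X] {c : X → X → ℝ}
    (hcm : Measurable (Function.uncurry c)) (hc0 : ∀ x, c x x = 0)
    (hcs : ∀ x y, c x y = c y x) (hctri : ∀ x y z, c x z ≤ c x y + c y z)
    (hcl : ∀ x y, dist x y ≤ c x y) {N : ℝ} (hcu : ∀ x y, c x y ≤ N * dist x y)
    {μ : Measure X} [IsProbabilityMeasure μ] {C : ℝ} (hC : 0 < C)
    (hexp : ∀ f : X → ℝ, Measurable f → (∃ M, ∀ x, |f x| ≤ M) →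
      (∀ x y, f x - f y ≤ c x y) → ∀ l : ℝ,
      ∫ x, Real.exp (l * (f x - ∫ z, f z ∂μ)) ∂μ ≤ Real.exp (C * l ^ 2 / 2))
    (x₀ : X) (hμ : Integrable (fun x => c x x₀) μ) :
    TpIneq 1 c C μ := by
  intro ν hν
  by_cases h : ν ≪ μ ∧ Integrable (llr ν μ) ν
  swap
  · have : relEntropy ν μ = ∞ := if_neg h
    rw [this, ENNReal.mul_top (by simpa using hC)]
    exact le_top
  obtain ⟨hac, hint⟩ := h
  rw [relEntropy_of_ac hac hint, ← ENNReal.ofReal_mul (by positivity)]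
  have hH := integral_llr_nonneg hac hint
  set H := ∫ x, llr ν μ x ∂ν with hHdef
  have hW : wassersteinDist 1 c μ ν ≤ ENNReal.ofReal (√(2 * C * H)) := by
    refine wassersteinDist_le_of_dual hcm hc0 hcs hctri hcl hcu (fun f hf ⟨M, hM⟩ hfc => ?_) x₀ hμ
    set D := ∫ x, f x ∂μ - ∫ x, f x ∂ν with hD
    have hbdd : ∀ x, |(-(D / C)) * (f x - ∫ z, f z ∂μ)| ≤
        |(-(D / C))| * (M + |∫ z, f z ∂μ|) := fun x => by
      rw [abs_mul]
      exact mul_le_mul_of_nonneg_left ((abs_sub _ _).trans (add_le_add_left (hM x) _))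
        (abs_nonneg _)
    have h1 := integral_le_integral_llr_add_log hac hint
      ((hf.sub_const (∫ z, f z ∂μ)).const_mul (-(D / C))) hbdd
    have h2 := (Real.log_le_iff_le_exp (integral_exp_pos (integrable_exp_of_bounded
      ((hf.sub_const (∫ z, f z ∂μ)).const_mul (-(D / C))) hbdd))).2
      (hexp f hf ⟨M, hM⟩ hfc (-(D / C)))
    have h3 : ∫ x, (-(D / C)) * (f x - ∫ z, f z ∂μ) ∂ν = D ^ 2 / C := by
      rw [integral_const_mul, integral_sub (integrable_of_bounded hf hM) (integrable_const _)]
      simp only [integral_const, probReal_univ, one_smul]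
      rw [← neg_sub, ← hD]
      ring
    have h4 : C * (-(D / C)) ^ 2 / 2 = D ^ 2 / C / 2 := by
      field_simp
    refine Real.le_sqrt_of_sq_le ?_
    have h5 : D ^ 2 / C ≤ 2 * H := by linarith
    rw [div_le_iff₀ hC] at h5
    linarith
  calc wassersteinDist 1 c μ ν ^ 2 ≤ ENNReal.ofReal (√(2 * C * H)) ^ 2 := by gcongr
    _ = ENNReal.ofReal (2 * C * H) := by
      rw [← ENNReal.ofReal_pow (Real.sqrt_nonneg _), Real.sq_sqrt (by positivity)]

lemma tpIneq_of_cost_eq_zero {X : Type*} [MeasurableSpace X] {c : X → X → ℝ}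
    (hc : ∀ x y, c x y = 0) (C : ℝ) (μ : Measure X) [IsProbabilityMeasure μ] :
    TpIneq 1 c C μ := by
  intro ν hν
  have h : wassersteinDist 1 c μ ν = 0 := by
    refine le_antisymm ((iInf₂_le (μ.prod ν) ⟨?_, ?_⟩).trans ?_) zero_le
    · simp [hc]
    · simp
    · simp
  simp [h]

end Tensorization

/-- **Theorem 2.11: tensorization of `T₁` by the McDiarmid–Rio martingale method**, under the
forward dependence condition (C1'). -/
theorem tensorization_T1_martingale
    {E : Type*} [MeasurableSpace E] [MetricSpace E] [CompleteSpace E]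
    [SecondCountableTopology E] [BorelSpace E]
    (C : ℝ) (hC : 0 < C) (n : ℕ)
    (K : (i : ℕ) → (Fin i → E) → Measure E)
    (hKm : ∀ i, Measurable (K i)) (hKp : ∀ i x, IsProbabilityMeasure (K i x))
    (hT : ∀ (i : ℕ) (x : Fin i → E), TpIneq 1 dist C (K i x))
    (S : ℝ) (hS : 0 < S)
    (hC1' : ∀ (k : ℕ) (hk : 1 ≤ k) (hkn : k ≤ n) (f : (Fin (n - k) → E) → ℝ),
      Measurable f → (∃ M : ℝ, ∀ u, |f u| ≤ M) →
      (∀ u v : Fin (n - k) → E, |f u - f v| ≤ ∑ i, dist (u i) (v i)) →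
      ∀ (x : Fin k → E) (y : E),
        |(∫ u, f u ∂futureChain K k x (n - k)) -
            ∫ u, f u ∂futureChain K k (Function.update x ⟨k - 1, by omega⟩ y) (n - k)| ≤
          S * dist (x ⟨k - 1, by omega⟩) y) :
    (∀ (F : (Fin n → E) → ℝ), Measurable F → ∀ α : ℝ, 0 ≤ α →
      (∀ (x : Fin n → E) (k : Fin n) (y : E),
        |F x - F (Function.update x k y)| ≤ α * dist (x k) y) →
      ∀ l : ℝ,
        ∫ x, Real.exp (l * (F x - ∫ z, F z ∂chainMeasure K n)) ∂chainMeasure K n ≤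
          Real.exp (C * l ^ 2 * (1 + S) ^ 2 * α ^ 2 * n / 2)) ∧
    TpIneq 1 (fun x y : Fin n → E => ∑ i, dist (x i) (y i)) (n * C * (1 + S) ^ 2)
      (chainMeasure K n) := by
  have hfut : ∀ k m, n = k + 1 + m → ∀ f : (Fin m → E) → ℝ, Measurable f →
      (∃ M : ℝ, ∀ u, |f u| ≤ M) →
      (∀ u v : Fin m → E, |f u - f v| ≤ ∑ i, dist (u i) (v i)) → ∀ (x : Fin k → E) (y z : E),
        |(∫ u, f u ∂futureChain K (k + 1) (Fin.snoc x y) m) -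
            ∫ u, f u ∂futureChain K (k + 1) (Fin.snoc x z) m| ≤ S * dist y z := by
    intro k m e f hf hfb hfl x y z
    have h := hC1' (k + 1) (by omega) (by omega)
    rw [show n - (k + 1) = m by omega] at h
    have h2 := h f hf hfb hfl (Fin.snoc x y) z
    change |(∫ u, f u ∂futureChain K (k + 1) (Fin.snoc x y) m) -
      ∫ u, f u ∂futureChain K (k + 1)
        (Function.update (Fin.snoc x y : Fin (k + 1) → E) (Fin.last k) z) m| ≤
        S * dist ((Fin.snoc x y : Fin (k + 1) → E) (Fin.last k)) z at h2
    rwa [Fin.update_snoc_last, Fin.snoc_last] at h2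
  have := isProbabilityMeasure_chainMeasure hKm hKp n
  refine ⟨fun F hF α hα hFc => (integrable_and_integral_exp_chainMeasure_le hC hKm hKp hT hS hfut
    hF hα (abs_sub_le_sum_dist hFc)).2, ?_⟩
  rcases n.eq_zero_or_pos with rfl | hn
  · exact tpIneq_of_cost_eq_zero (by simp) _ _
  obtain ⟨x₀⟩ := nonempty_of_isProbabilityMeasure (chainMeasure K n)
  have htri : ∀ x y z : Fin n → E,
      ∑ i, dist (x i) (z i) ≤ ∑ i, dist (x i) (y i) + ∑ i, dist (y i) (z i) := fun x y z => by
    rw [← Finset.sum_add_distrib]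
    exact Finset.sum_le_sum fun i _ => dist_triangle _ _ _
  have hsymm : ∀ x y : Fin n → E, ∑ i, dist (x i) (y i) = ∑ i, dist (y i) (x i) := fun x y =>
    Finset.sum_congr rfl fun i _ => dist_comm _ _
  have hmeas : Measurable (Function.uncurry fun x y : Fin n → E => ∑ i, dist (x i) (y i)) := by
    simp only [Function.uncurry_def]
    fun_prop
  refine tpIneq_of_integral_exp_le (N := n) hmeas (by simp) hsymm htri (fun x y => ?_)
    (fun x y => ?_) (by positivity) (fun f hf _ hfl l => ?_) x₀ ?_
  · exact (dist_pi_le_iff (Finset.sum_nonneg fun i _ => dist_nonneg)).2 fun i =>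
      Finset.single_le_sum (f := fun i => dist (x i) (y i)) (fun j _ => dist_nonneg)
        (Finset.mem_univ i)
  · simpa using Finset.sum_le_sum fun i (_ : i ∈ Finset.univ) => dist_le_pi_dist x y i
  · refine ((integrable_and_integral_exp_chainMeasure_le hC hKm hKp hT hS hfut hf zero_le_one
      fun x y => ?_).2 l).trans (le_of_eq ?_)
    · rw [one_mul]
      exact abs_sub_le_iff.2 ⟨hfl x y, (hfl y x).trans_eq (hsymm y x)⟩
    · ring_nf
  · refine (integrable_and_integral_exp_chainMeasure_le hC hKm hKp hT hS hfut
      (hmeas.comp (measurable_id.prodMk measurable_const)) zero_le_one fun x y => ?_).1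
    have h1 := htri x y x₀
    have h2 := htri y x x₀
    rw [hsymm y x] at h2
    simp only [Function.comp_apply, Function.uncurry_apply_pair, id]
    rw [one_mul]
    exact abs_sub_le_iff.2 ⟨by linarith, by linarith⟩

end
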